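/- arXiv:1809.08206 — 2 statements merged into one kernel-verified Lean document; each statement's English description precedes it below -/
import Mathlib

section
/- Let {(x_i, y_i, d_i) : i = 1,...,N} be given data with x_1 < ... < x_N lying strictly above the line t(x) = m x + k, i.e. y_i > t_i := m x_i + k for all i. Suppose for each i = 1,...,N−1: 0 ≤ α_i < min{a_i, (y_i − t_i)/(y_1 − t_1), (y_{i+1} − t_{i+1})/(y_N − t_N)}, u_i > 0, and v_i > max{0, v_{9i}, v_{10i}}, where v_{9i} = −u_i[2(y_i − t_i) + (y_i − t_{i+1}) + h_i d_i − α_i{2(y_1 − t_1) + (y_1 − t_N) + (x_N − x_1) d_1}]/(y_i − t_i − α_i(y_1 − t_1)) and v_{10i} = −u_i[(y_{i+1} − t_i) + 2(y_{i+1} − t_{i+1}) − h_i d_{i+1} − α_i{(y_N − t_1) + 2(y_N − t_N) − (x_N − x_1) d_N}]/(y_{i+1} − t_{i+1} − α_i(y_N − t_N)). Then the corresponding rational cubic spline fractal interpolation function Ψ satisfies Ψ(x) > m x + k for all x ∈ I = [x_1, x_N]. -/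
/-!
Both `Ψ` and the line are rational cubic fractal interpolants, with the same scalings and shape
parameters, because the rational Hermite cubic depends linearly on its data and reproduces affine
functions. Hence so is their difference `g`, and the hypotheses make the coefficients in the
numerators of its Hermite cubics nonnegative and the outer ones positive. Thus `α i * g b < g a`
at corresponding points, with `0 ≤ α i < 1`; taking for `a` a minimum point of `g` shows that the
minimum is positive.
-/

open Set AffineMap

theorem forall_pos_of_exists_mul_lt {X R : Type*} [TopologicalSpace X] [Ring R] [LinearOrder R]
    [IsStrictOrderedRing R] {S : Set X} {g : X → R}
    (hS : IsCompact S) (hg : LowerSemicontinuousOn g S)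
    (h : ∀ a ∈ S, ∃ b ∈ S, ∃ c : R, 0 ≤ c ∧ c < 1 ∧ c * g b < g a) :
    ∀ a ∈ S, 0 < g a := by
  intro a ha
  obtain ⟨a₀, ha₀, hmin⟩ := hg.exists_isMinOn ⟨a, ha⟩ hS
  obtain ⟨b, hb, c, hc₀, hc₁, hlt⟩ := h a₀ ha₀
  have hself : c * g a₀ < g a₀ := (mul_le_mul_of_nonneg_left (hmin hb) hc₀).trans_lt hlt
  have hpos : 0 < (1 - c) * g a₀ := by rwa [sub_mul, one_mul, sub_pos]
  exact (pos_of_mul_pos_right hpos (sub_nonneg.2 hc₁.le)).trans_le (hmin ha)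

theorem exists_mem_Icc_succ {β : Type*} [LinearOrder β] {x : ℕ → β} {m n : ℕ} {s : β}
    (hmn : m < n) (hs : s ∈ Icc (x m) (x n)) :
    ∃ i ∈ Ico m n, s ∈ Icc (x i) (x (i + 1)) := by
  induction n, hmn using Nat.le_induction with
  | base => exact ⟨m, ⟨le_rfl, m.lt_succ_self⟩, hs⟩
  | succ n hmn ih =>
    rcases le_total s (x n) with hsn | hns
    · obtain ⟨i, hi, hsi⟩ := ih ⟨hs.1, hsn⟩
      exact ⟨i, ⟨hi.1, hi.2.trans n.lt_succ_self⟩, hsi⟩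
    · exact ⟨n, ⟨Nat.le_of_succ_le hmn, n.lt_succ_self⟩, hns, hs.2⟩

theorem strictMonoOn_Icc_of_lt_succ {β : Type*} [Preorder β] {x : ℕ → β} {m n : ℕ}
    (hx : ∀ i, m ≤ i → i < n → x i < x (i + 1)) : StrictMonoOn x (Icc m n) :=
  strictMonoOn_of_lt_add_one ordConnected_Icc fun i _ hi hi' ↦ hx i hi.1 hi'.2

/-- The rational cubic Hermite interpolant on the unit interval with end values `p₀`, `p₁`, end
slopes `s₀`, `s₁` and shape parameters `u`, `v`. -/
def rationalHermite {K : Type*} [Field K] (u v p₀ p₁ s₀ s₁ θ : K) : K :=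
  (u * p₀ * (1 - θ) ^ 3 + ((3 * u + v) * p₀ + u * s₀) * θ * (1 - θ) ^ 2
    + ((3 * u + v) * p₁ - u * s₁) * θ ^ 2 * (1 - θ) + u * p₁ * θ ^ 3) / (u + v * θ * (1 - θ))

theorem rationalHermite_sub {K : Type*} [Field K] (u v p₀ p₁ s₀ s₁ p₀' p₁' s₀' s₁' θ : K) :
    rationalHermite u v (p₀ - p₀') (p₁ - p₁') (s₀ - s₀') (s₁ - s₁') θ =
      rationalHermite u v p₀ p₁ s₀ s₁ θ - rationalHermite u v p₀' p₁' s₀' s₁' θ := by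
  rw [rationalHermite, rationalHermite, rationalHermite, ← sub_div]
  ring

section OrderedField

variable {K : Type*} [Field K] [LinearOrder K] [IsStrictOrderedRing K]

theorem lineMap_mem_Icc {a b θ : K} (hab : a ≤ b) (hθ : θ ∈ Icc (0 : K) 1) :
    lineMap a b θ ∈ Icc a b :=
  segment_eq_Icc hab ▸ lineMap_mem_segment K a b hθ

theorem succ_sub_div_sub_le_one {x : ℕ → K} {m n i : ℕ} (hx : MonotoneOn x (Icc m n))
    (hi : i ∈ Ico m n) : (x (i + 1) - x i) / (x n - x m) ≤ 1 := by
  obtain ⟨hmi, hin⟩ := hi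
  have hmn : m ≤ n := hmi.trans hin.le
  have hfirst : x m ≤ x i := hx ⟨le_rfl, hmn⟩ ⟨hmi, hin.le⟩ hmi
  have hlast : x (i + 1) ≤ x n := hx ⟨hmi.trans i.le_succ, hin⟩ ⟨hmn, le_rfl⟩ hin
  have htotal : x m ≤ x n := hx ⟨le_rfl, hmn⟩ ⟨hmn, le_rfl⟩ hmn
  exact div_le_one_of_le₀ (by linarith) (sub_nonneg.2 htotal)

variable {u v p₀ p₁ s₀ s₁ θ : K}

theorem rationalHermite_denom_pos (hu : 0 < u) (hv : 0 ≤ v) (hθ : θ ∈ Icc (0 : K) 1) :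
    0 < u + v * θ * (1 - θ) :=
  add_pos_of_pos_of_nonneg hu (mul_nonneg (mul_nonneg hv hθ.1) (sub_nonneg.2 hθ.2))

theorem rationalHermite_eq_lineMap (hu : 0 < u) (hv : 0 ≤ v) (hθ : θ ∈ Icc (0 : K) 1) :
    rationalHermite u v p₀ p₁ (p₁ - p₀) (p₁ - p₀) θ = lineMap p₀ p₁ θ := by
  rw [rationalHermite, div_eq_iff (rationalHermite_denom_pos hu hv hθ).ne', lineMap_apply_ring]
  ring

theorem rationalHermite_pos (hu : 0 < u) (hv : 0 ≤ v) (hp₀ : 0 < p₀) (hp₁ : 0 < p₁)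
    (hs₀ : 0 ≤ (3 * u + v) * p₀ + u * s₀) (hs₁ : 0 ≤ (3 * u + v) * p₁ - u * s₁)
    (hθ : θ ∈ Icc (0 : K) 1) : 0 < rationalHermite u v p₀ p₁ s₀ s₁ θ := by
  refine div_pos ?_ (rationalHermite_denom_pos hu hv hθ)
  obtain ⟨hθ₀, hθ₁⟩ := hθ
  have hθ' : 0 ≤ 1 - θ := sub_nonneg.2 hθ₁
  rcases hθ₀.eq_or_lt with rfl | hθpos
  · simpa using mul_pos hu hp₀
  · positivity

end OrderedField

/-- The equation of a rational cubic spline fractal interpolation function for the knots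
`x 1, …, x N`, values `y`, derivatives `d`, scalings `α` and shape parameters `u`, `v`. Both the
piece `[x i, x (i + 1)]` and the whole interval are parametrized by `θ ∈ [0, 1]`, so that the
affine map `L_i` carries `lineMap (x 1) (x N) θ` to `lineMap (x i) (x (i + 1)) θ`; slopes are
accordingly taken with respect to `θ`. -/
def IsRationalCubicFIF (N : ℕ) (x y d α u v : ℕ → ℝ) (Ψ : ℝ → ℝ) : Prop :=
  ∀ i ∈ Ico 1 N, ∀ θ ∈ Icc (0 : ℝ) 1,
    Ψ (lineMap (x i) (x (i + 1)) θ) = α i * Ψ (lineMap (x 1) (x N) θ) +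
      rationalHermite (u i) (v i) (y i - α i * y 1) (y (i + 1) - α i * y N)
        ((x (i + 1) - x i) * d i - α i * ((x N - x 1) * d 1))
        ((x (i + 1) - x i) * d (i + 1) - α i * ((x N - x 1) * d N)) θ

namespace IsRationalCubicFIF

variable {N : ℕ} {x y d α u v : ℕ → ℝ} {Ψ : ℝ → ℝ}

theorem of_forall_mem_Icc (hx : x 1 < x N)
    (h : ∀ i ∈ Ico 1 N, ∀ t ∈ Icc (x 1) (x N),
      Ψ ((x (i + 1) - x i) / (x N - x 1) * t + (x N * x i - x 1 * x (i + 1)) / (x N - x 1)) =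
        α i * Ψ t +
          rationalHermite (u i) (v i) (y i - α i * y 1) (y (i + 1) - α i * y N)
            ((x (i + 1) - x i) * d i - α i * ((x N - x 1) * d 1))
            ((x (i + 1) - x i) * d (i + 1) - α i * ((x N - x 1) * d N))
            ((t - x 1) / (x N - x 1))) :
    IsRationalCubicFIF N x y d α u v Ψ := by
  intro i hi θ hθ
  have hlen : x N - x 1 ≠ 0 := (sub_pos.2 hx).ne'
  have hparam : (lineMap (x 1) (x N) θ - x 1) / (x N - x 1) = θ := by
    rw [lineMap_apply_ring', add_sub_cancel_right, mul_div_cancel_right₀ _ hlen]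
  have hmap : (x (i + 1) - x i) / (x N - x 1) * lineMap (x 1) (x N) θ +
      (x N * x i - x 1 * x (i + 1)) / (x N - x 1) = lineMap (x i) (x (i + 1)) θ := by
    rw [lineMap_apply_ring', lineMap_apply_ring']
    field_simp
    ring
  have hmem : lineMap (x 1) (x N) θ ∈ Icc (x 1) (x N) :=
    lineMap_mem_Icc hx.le hθ
  simpa only [hparam, hmap] using h i hi _ hmem

theorem sub {y' d' : ℕ → ℝ} {Φ : ℝ → ℝ} (hΨ : IsRationalCubicFIF N x y d α u v Ψ)
    (hΦ : IsRationalCubicFIF N x y' d' α u v Φ) :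
    IsRationalCubicFIF N x (y - y') (d - d') α u v (Ψ - Φ) := by
  intro i hi θ hθ
  simp only [Pi.sub_apply, hΨ i hi θ hθ, hΦ i hi θ hθ]
  rw [add_sub_add_comm, ← mul_sub, ← rationalHermite_sub]
  congr 2 <;> ring

theorem affine (m k : ℝ) (hu : ∀ i ∈ Ico 1 N, 0 < u i) (hv : ∀ i ∈ Ico 1 N, 0 ≤ v i) :
    IsRationalCubicFIF N x (fun i ↦ m * x i + k) (fun _ ↦ m) α u v (fun s ↦ m * s + k) := by
  intro i hi θ hθ
  have hrep := rationalHermite_eq_lineMap (p₀ := m * x i + k - α i * (m * x 1 + k))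
    (p₁ := m * x (i + 1) + k - α i * (m * x N + k)) (hu i hi) (hv i hi) hθ
  have hslope : m * x (i + 1) + k - α i * (m * x N + k) - (m * x i + k - α i * (m * x 1 + k)) =
      (x (i + 1) - x i) * m - α i * ((x N - x 1) * m) := by ring
  rw [hslope] at hrep
  rw [hrep]
  simp only [lineMap_apply_ring']
  ring

theorem pos (hN : 1 < N) (hΨ : IsRationalCubicFIF N x y d α u v Ψ)
    (hΨc : LowerSemicontinuousOn Ψ (Icc (x 1) (x N)))
    (hα : ∀ i ∈ Ico 1 N, 0 ≤ α i ∧ α i < 1)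
    (hu : ∀ i ∈ Ico 1 N, 0 < u i) (hv : ∀ i ∈ Ico 1 N, 0 ≤ v i)
    (hleft : ∀ i ∈ Ico 1 N, α i * y 1 < y i)
    (hright : ∀ i ∈ Ico 1 N, α i * y N < y (i + 1))
    (hV : ∀ i ∈ Ico 1 N, 0 ≤ (3 * u i + v i) * (y i - α i * y 1) +
      u i * ((x (i + 1) - x i) * d i - α i * ((x N - x 1) * d 1)))
    (hW : ∀ i ∈ Ico 1 N, 0 ≤ (3 * u i + v i) * (y (i + 1) - α i * y N) -
      u i * ((x (i + 1) - x i) * d (i + 1) - α i * ((x N - x 1) * d N))) :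
    ∀ s ∈ Icc (x 1) (x N), 0 < Ψ s := by
  refine forall_pos_of_exists_mul_lt isCompact_Icc hΨc fun s hs ↦ ?_
  obtain ⟨i, hi, hsi⟩ := exists_mem_Icc_succ hN hs
  obtain ⟨θ, hθ, rfl⟩ : s ∈ lineMap (x i) (x (i + 1)) '' Icc (0 : ℝ) 1 := by
    rwa [← segment_eq_image_lineMap, segment_eq_Icc (hsi.1.trans hsi.2)]
  refine ⟨lineMap (x 1) (x N) θ, lineMap_mem_Icc (hs.1.trans hs.2) hθ,
    α i, (hα i hi).1, (hα i hi).2, ?_⟩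
  rw [hΨ i hi θ hθ]
  exact lt_add_of_pos_right _ (rationalHermite_pos (hu i hi) (hv i hi)
    (sub_pos.2 (hleft i hi)) (sub_pos.2 (hright i hi)) (hV i hi) (hW i hi) hθ)

end IsRationalCubicFIF

theorem stmt_10_general {N : ℕ} (hN : 1 < N) {x y d α u v : ℕ → ℝ} {Ψ : ℝ → ℝ} (m k : ℝ)
    (hΨ : IsRationalCubicFIF N x y d α u v Ψ)
    (hΨc : LowerSemicontinuousOn Ψ (Icc (x 1) (x N)))
    (hα : ∀ i ∈ Ico 1 N, 0 ≤ α i ∧ α i < 1)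
    (hu : ∀ i ∈ Ico 1 N, 0 < u i) (hv : ∀ i ∈ Ico 1 N, 0 ≤ v i)
    (hleft : ∀ i ∈ Ico 1 N, α i * (y 1 - (m * x 1 + k)) < y i - (m * x i + k))
    (hright : ∀ i ∈ Ico 1 N, α i * (y N - (m * x N + k)) < y (i + 1) - (m * x (i + 1) + k))
    (hV : ∀ i ∈ Ico 1 N,
      0 ≤ (3 * u i + v i) * (y i - (m * x i + k) - α i * (y 1 - (m * x 1 + k))) +
        u i * ((x (i + 1) - x i) * (d i - m) - α i * ((x N - x 1) * (d 1 - m))))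
    (hW : ∀ i ∈ Ico 1 N,
      0 ≤ (3 * u i + v i) * (y (i + 1) - (m * x (i + 1) + k) - α i * (y N - (m * x N + k))) -
        u i * ((x (i + 1) - x i) * (d (i + 1) - m) - α i * ((x N - x 1) * (d N - m)))) :
    ∀ s ∈ Icc (x 1) (x N), m * s + k < Ψ s := by
  have hline : ContinuousOn (-fun s ↦ m * s + k) (Icc (x 1) (x N)) := by fun_prop
  have hc : LowerSemicontinuousOn (Ψ - fun s ↦ m * s + k) (Icc (x 1) (x N)) := by
    rw [sub_eq_add_neg]
    exact hΨc.add hline.lowerSemicontinuousOn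
  exact fun s hs ↦ sub_pos.1 <|
    (hΨ.sub (.affine m k hu hv)).pos hN hc hα hu hv hleft hright hV hW s hs

/-- If the data lies strictly above the line `t(x) = m x + k` and the
scaling factors and shape parameters satisfy the stated restrictions, then the
RCSFIF `Ψ` lies strictly above the line on `I`. -/
theorem stmt_10
    (N : ℕ) (hN : 2 < N)
    (x y d : ℕ → ℝ) (m k : ℝ)
    (hx : ∀ i, 1 ≤ i → i < N → x i < x (i + 1))
    (tl : ℕ → ℝ) (htl : ∀ i, tl i = m * x i + k)
    (hyt : ∀ i, 1 ≤ i → i ≤ N → tl i < y i)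
    (a : ℕ → ℝ) (ha : ∀ i, a i = (x (i + 1) - x i) / (x N - x 1))
    (L : ℕ → ℝ → ℝ)
    (hL : ∀ i, 1 ≤ i → i < N → ∀ t : ℝ, L i t =
      a i * t + (x N * x i - x 1 * x (i + 1)) / (x N - x 1))
    (α u v : ℕ → ℝ)
    (hα : ∀ i, 1 ≤ i → i < N →
      0 ≤ α i ∧ α i < min (a i)
        (min ((y i - tl i) / (y 1 - tl 1)) ((y (i + 1) - tl (i + 1)) / (y N - tl N))))
    (hu : ∀ i, 1 ≤ i → i < N → 0 < u i)
    (hv : ∀ i, 1 ≤ i → i < N →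
      max 0 (max
        (-(u i) * (2 * (y i - tl i) + (y i - tl (i + 1)) + (x (i + 1) - x i) * d i
            - α i * (2 * (y 1 - tl 1) + (y 1 - tl N) + (x N - x 1) * d 1))
          / (y i - tl i - α i * (y 1 - tl 1)))
        (-(u i) * ((y (i + 1) - tl i) + 2 * (y (i + 1) - tl (i + 1))
            - (x (i + 1) - x i) * d (i + 1)
            - α i * ((y N - tl 1) + 2 * (y N - tl N) - (x N - x 1) * d N))
          / (y (i + 1) - tl (i + 1) - α i * (y N - tl N)))) < v i)
    (U V W Z : ℕ → ℝ)
    (hU : ∀ i, U i = u i * (y i - α i * y 1))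
    (hV : ∀ i, V i = (3 * u i + v i) * (y i - α i * y 1)
      + u i * (x (i + 1) - x i) * d i - α i * u i * (x N - x 1) * d 1)
    (hW : ∀ i, W i = (3 * u i + v i) * (y (i + 1) - α i * y N)
      - u i * (x (i + 1) - x i) * d (i + 1) + α i * u i * (x N - x 1) * d N)
    (hZ : ∀ i, Z i = u i * (y (i + 1) - α i * y N))
    (q : ℕ → ℝ → ℝ)
    (hq : ∀ (i : ℕ) (t θ : ℝ), θ = (t - x 1) / (x N - x 1) →
      q i t = (U i * (1 - θ) ^ 3 + V i * θ * (1 - θ) ^ 2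
        + W i * θ ^ 2 * (1 - θ) + Z i * θ ^ 3) / (u i + v i * θ * (1 - θ)))
    (Ψ : ℝ → ℝ)
    (hΨc : ContinuousOn Ψ (Set.Icc (x 1) (x N)))
    (hΨ : ∀ i, 1 ≤ i → i < N → ∀ t ∈ Set.Icc (x 1) (x N),
      Ψ (L i t) = α i * Ψ t + q i t)
    (hΨy : ∀ i, 1 ≤ i → i ≤ N → Ψ (x i) = y i) :
    ∀ s ∈ Set.Icc (x 1) (x N), m * s + k < Ψ s := by
  obtain rfl : tl = fun i ↦ m * x i + k := funext htl
  have hmono : StrictMonoOn x (Icc 1 N) := strictMonoOn_Icc_of_lt_succ hx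
  have hx1N : x 1 < x N := hmono ⟨le_rfl, by omega⟩ ⟨by omega, le_rfl⟩ (by omega)
  have hFIF : IsRationalCubicFIF N x y d α u v Ψ := by
    refine .of_forall_mem_Icc hx1N fun i hi t ht ↦ ?_
    rw [← ha, ← hL i hi.1 hi.2, hΨ i hi.1 hi.2 t ht, hq i t _ rfl, rationalHermite,
      hU, hV, hW, hZ]
    ring
  have hres₁ : 0 < y 1 - (m * x 1 + k) := sub_pos.2 (hyt 1 le_rfl (by omega))
  have hresN : 0 < y N - (m * x N + k) := sub_pos.2 (hyt N (by omega) le_rfl)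
  simp only [lt_min_iff, lt_div_iff₀ hres₁, lt_div_iff₀ hresN] at hα
  simp only [max_lt_iff] at hv
  have hleft i (hi : i ∈ Ico 1 N) := (hα i hi.1 hi.2).2.2.1
  have hright i (hi : i ∈ Ico 1 N) := (hα i hi.1 hi.2).2.2.2
  refine stmt_10_general (by omega) m k hFIF hΨc.lowerSemicontinuousOn
    (fun i hi ↦ ⟨(hα i hi.1 hi.2).1, (hα i hi.1 hi.2).2.1.trans_le ?_⟩)
    (fun i hi ↦ hu i hi.1 hi.2) (fun i hi ↦ (hv i hi.1 hi.2).1.le) hleft hright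
    (fun i hi ↦ ?_) (fun i hi ↦ ?_)
  · exact (ha i).trans_le (succ_sub_div_sub_le_one hmono.monotoneOn hi)
  · linarith [(div_lt_iff₀ (sub_pos.2 (hleft i hi))).1 (hv i hi.1 hi.2).2.1]
  · linarith [(div_lt_iff₀ (sub_pos.2 (hright i hi))).1 (hv i hi.1 hi.2).2.2]
end

section
/- Fix the data {(x_i, y_i, d_i)}, the scaling factors α_i with |α_i| ≤ κ a_i (0 ≤ κ < 1) and the parameters u_i > 0, and for v = (v_1, ..., v_{N−1}) with v_i > 0 let Ψ_v denote the corresponding rational cubic spline fractal interpolation function. Then as min_i v_i → ∞, Ψ_v converges uniformly on I to the affine fractal interpolation function Ψ_∞, the unique continuous function satisfying Ψ_∞(L_i(x)) = α_i Ψ_∞(x) + (y_i − α_i y_1)(1 − θ) + (y_{i+1} − α_i y_N) θ for all x ∈ I and i = 1,...,N−1, where θ = (x − x_1)/(x_N − x_1). -/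
/-!
The difference of two fractal functions with the same vertical scalings `αᵢ` solves the same
self-referential equation, with offset the difference of the two offsets. Evaluating that equation
at a maximum of its norm shows that the norm is at most `ε` as soon as the offset on the `i`-th
cell is at most `(1 - |αᵢ|) ε`. The offset of the rational cubic spline differs from its affine
limit by `O(uᵢ / vᵢ)`, uniformly in `θ`, because `vᵢ θ(1-θ)` is a summand of the denominator
`uᵢ + vᵢ θ(1-θ)`.
-/

open AffineMap Filter Set

theorem exists_mem_Icc_succ_of_mem_Icc {β : Type*} [LinearOrder β] (x : ℕ → β) {m n : ℕ}
    (hmn : m < n) {t : β} (ht : t ∈ Icc (x m) (x n)) :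
    ∃ i ∈ Ico m n, t ∈ Icc (x i) (x (i + 1)) := by
  induction n, hmn using Nat.le_induction with
  | base => exact ⟨m, ⟨le_rfl, m.lt_succ_self⟩, ht⟩
  | succ n hmn ih =>
    rcases le_total t (x n) with htn | htn
    · obtain ⟨i, hi, hti⟩ := ih ⟨ht.1, htn⟩
      exact ⟨i, ⟨hi.1, hi.2.trans n.lt_succ_self⟩, hti⟩
    · exact ⟨n, ⟨Nat.le_of_succ_le hmn, n.lt_succ_self⟩, htn, ht.2⟩

theorem exists_lineMap_eq_of_mem_Icc {𝕜 : Type*} [Field 𝕜] [LinearOrder 𝕜] [IsStrictOrderedRing 𝕜]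
    {p q t : 𝕜} (ht : t ∈ Icc p q) : ∃ θ ∈ Icc (0 : 𝕜) 1, lineMap p q θ = t := by
  rwa [← segment_eq_Icc (ht.1.trans ht.2), segment_eq_image_lineMap] at ht

theorem strictMonoOn_Icc_one_of_lt_succ {β : Type*} [Preorder β] {x : ℕ → β} {N : ℕ}
    (hx : ∀ i, 1 ≤ i → i < N → x i < x (i + 1)) : StrictMonoOn x (Icc 1 N) :=
  strictMonoOn_of_lt_add_one ordConnected_Icc fun i _ hi hi' ↦
    hx i hi.1 (Nat.lt_of_succ_le hi'.2)

theorem cell_ratio_le_one {𝕜 : Type*} [Field 𝕜] [LinearOrder 𝕜] [IsStrictOrderedRing 𝕜]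
    {x : ℕ → 𝕜} {N i : ℕ} (hx : MonotoneOn x (Icc 1 N)) (hi : i ∈ Ico 1 N) :
    (x (i + 1) - x i) / (x N - x 1) ≤ 1 := by
  have hN : 1 ≤ N := hi.1.trans hi.2.le
  have h_left : x 1 ≤ x i := hx ⟨le_rfl, hN⟩ ⟨hi.1, hi.2.le⟩ hi.1
  have h_right : x (i + 1) ≤ x N := hx ⟨by simp, hi.2⟩ ⟨hN, le_rfl⟩ hi.2
  have h_cell : x i ≤ x (i + 1) := hx ⟨hi.1, hi.2.le⟩ ⟨by simp, hi.2⟩ i.le_succ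
  exact div_le_one_of_le₀ (by linarith) (by linarith)

theorem forall_mem_le_of_exists_le_convex_comb {X : Type*} [TopologicalSpace X] {s : Set X}
    {f : X → ℝ} {C : ℝ} (hs : IsCompact s) (hf : UpperSemicontinuousOn f s)
    (h : ∀ p ∈ s, ∃ q ∈ s, ∃ c ∈ Ico (0 : ℝ) 1, f p ≤ c * f q + (1 - c) * C) :
    ∀ p ∈ s, f p ≤ C := by
  intro p hp
  obtain ⟨m, hm, hmax⟩ := hf.exists_isMaxOn ⟨p, hp⟩ hs
  obtain ⟨q, hq, c, ⟨hc0, hc1⟩, hle⟩ := h m hm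
  have hself : f m ≤ c * f m + (1 - c) * C :=
    hle.trans (by gcongr; exact hmax hq)
  have hmC : f m ≤ C := le_of_mul_le_mul_left (by linarith) (sub_pos.2 hc1)
  exact (hmax hp).trans hmC

section FractalFunction

variable {E : Type*} [SeminormedAddCommGroup E] [NormedSpace ℝ E] {N : ℕ} {x α : ℕ → ℝ}

/-- `f` is a fractal function on `[x 1, x N]` with knots `x 1, …, x N`, vertical scalings `α i` and
offsets `q i`: a continuous solution of `f (L i t) = α i • f t + q i θ`. Both `t` and its image
`L i t` in the `i`-th cell are expressed through the common parameter `θ ∈ [0, 1]`, so the affine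
maps `L i` do not appear. -/
structure IsFractalFunction (N : ℕ) (x α : ℕ → ℝ) (q : ℕ → ℝ → E) (f : ℝ → E) : Prop where
  continuousOn : ContinuousOn f (Icc (x 1) (x N))
  apply_lineMap : ∀ i ∈ Ico 1 N, ∀ θ ∈ Icc (0 : ℝ) 1,
    f (lineMap (x i) (x (i + 1)) θ) = α i • f (lineMap (x 1) (x N) θ) + q i θ

namespace IsFractalFunction

theorem of_apply_affine {q : ℕ → ℝ → E} {f : ℝ → E} (hx : x 1 < x N)
    (hf : ContinuousOn f (Icc (x 1) (x N)))
    (heq : ∀ i ∈ Ico 1 N, ∀ t ∈ Icc (x 1) (x N),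
      f ((x (i + 1) - x i) / (x N - x 1) * t + (x N * x i - x 1 * x (i + 1)) / (x N - x 1)) =
        α i • f t + q i ((t - x 1) / (x N - x 1))) :
    IsFractalFunction N x α q f where
  continuousOn := hf
  apply_lineMap i hi θ hθ := by
    have hlen : x N - x 1 ≠ 0 := (sub_pos.2 hx).ne'
    have hmem : lineMap (x 1) (x N) θ ∈ Icc (x 1) (x N) :=
      (convex_Icc _ _).lineMap_mem (left_mem_Icc.2 hx.le) (right_mem_Icc.2 hx.le) hθ
    convert heq i hi _ hmem using 3
    · rw [lineMap_apply_ring', lineMap_apply_ring']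
      field_simp
      ring
    · rw [lineMap_apply_ring', add_sub_cancel_right, mul_div_cancel_right₀ _ hlen]

theorem sub {q r : ℕ → ℝ → E} {f g : ℝ → E} (hf : IsFractalFunction N x α q f)
    (hg : IsFractalFunction N x α r g) : IsFractalFunction N x α (q - r) (f - g) where
  continuousOn := hf.continuousOn.sub hg.continuousOn
  apply_lineMap i hi θ hθ := by
    simp only [Pi.sub_apply, hf.apply_lineMap i hi θ hθ, hg.apply_lineMap i hi θ hθ]
    module

theorem norm_le {q : ℕ → ℝ → E} {f : ℝ → E} {C : ℝ} (hf : IsFractalFunction N x α q f)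
    (hN : 1 < N) (hα : ∀ i ∈ Ico 1 N, |α i| < 1)
    (hq : ∀ i ∈ Ico 1 N, ∀ θ ∈ Icc (0 : ℝ) 1, ‖q i θ‖ ≤ (1 - |α i|) * C) :
    ∀ t ∈ Icc (x 1) (x N), ‖f t‖ ≤ C := by
  refine forall_mem_le_of_exists_le_convex_comb isCompact_Icc
    hf.continuousOn.norm.upperSemicontinuousOn fun t ht ↦ ?_
  obtain ⟨i, hi, hti⟩ := exists_mem_Icc_succ_of_mem_Icc x hN ht
  obtain ⟨θ, hθ, rfl⟩ := exists_lineMap_eq_of_mem_Icc hti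
  have hx : x 1 ≤ x N := ht.1.trans ht.2
  refine ⟨lineMap (x 1) (x N) θ,
    (convex_Icc _ _).lineMap_mem (left_mem_Icc.2 hx) (right_mem_Icc.2 hx) hθ,
    |α i|, ⟨abs_nonneg _, hα i hi⟩, ?_⟩
  calc ‖f (lineMap (x i) (x (i + 1)) θ)‖
      = ‖α i • f (lineMap (x 1) (x N) θ) + q i θ‖ := by rw [hf.apply_lineMap i hi θ hθ]
    _ ≤ ‖α i • f (lineMap (x 1) (x N) θ)‖ + ‖q i θ‖ := norm_add_le _ _
    _ ≤ |α i| * ‖f (lineMap (x 1) (x N) θ)‖ + (1 - |α i|) * C := by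
      rw [norm_smul, Real.norm_eq_abs]
      gcongr
      exact hq i hi θ hθ

theorem exists_mem_forall_norm_sub_le {V : Type*} {l : Filter V} {q : ℕ → V → ℝ → E}
    {r : ℕ → ℝ → E} {g : ℝ → E} (hg : IsFractalFunction N x α r g) (hN : 1 < N)
    (hα : ∀ i ∈ Ico 1 N, |α i| < 1)
    (hqr : ∀ i ∈ Ico 1 N, TendstoUniformlyOn (q i) (r i) l (Icc 0 1)) {ε : ℝ} (hε : 0 < ε) :
    ∃ S ∈ l, ∀ (v : ℕ → V) (f : ℝ → E), (∀ i ∈ Ico 1 N, v i ∈ S) →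
      IsFractalFunction N x α (fun i ↦ q i (v i)) f →
      ∀ t ∈ Icc (x 1) (x N), ‖f t - g t‖ ≤ ε := by
  have hclose : ∀ᶠ w in l, ∀ i ∈ Ico 1 N, ∀ θ ∈ Icc (0 : ℝ) 1,
      dist (r i θ) (q i w θ) < (1 - |α i|) * ε :=
    (eventually_all_finite (finite_Ico 1 N)).2 fun i hi ↦
      Metric.tendstoUniformlyOn_iff.1 (hqr i hi) _ (mul_pos (sub_pos.2 (hα i hi)) hε)
  refine ⟨_, hclose, fun v f hv hf ↦ (hf.sub hg).norm_le hN hα fun i hi θ hθ ↦ ?_⟩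
  rw [Pi.sub_apply, Pi.sub_apply, ← dist_eq_norm']
  exact (hv i hi i hi θ hθ).le

end IsFractalFunction

end FractalFunction

section RationalCubic

/-- The rational cubic Hermite interpolant on `[0, 1]` with values `A, B` and derivatives `D, E` at
the endpoints `0, 1`. The shape parameter `v` is the tension: relative to `u`, a large `v` pulls
the curve towards the chord from `A` to `B`. -/
noncomputable def rationalCubic (u v A B D E θ : ℝ) : ℝ :=
  (u * A * (1 - θ) ^ 3 + ((3 * u + v) * A + u * D) * θ * (1 - θ) ^ 2
    + ((3 * u + v) * B - u * E) * θ ^ 2 * (1 - θ) + u * B * θ ^ 3) / (u + v * θ * (1 - θ))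

variable {u v θ : ℝ}

theorem rationalCubic_sub_chord (A B D E : ℝ) (h : u + v * θ * (1 - θ) ≠ 0) :
    rationalCubic u v A B D E θ - (A * (1 - θ) + B * θ) =
      u * (θ * (1 - θ)) / (u + v * θ * (1 - θ)) *
        ((2 * θ - 1) * (B - A) + (1 - θ) * D - θ * E) := by
  rw [rationalCubic, div_sub' h, div_mul_eq_mul_div]
  congr 1
  ring

theorem abs_hermite_combination_le (P D E : ℝ) (hθ : θ ∈ Icc (0 : ℝ) 1) :
    |(2 * θ - 1) * P + (1 - θ) * D - θ * E| ≤ |P| + |D| + |E| := by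
  obtain ⟨h0, h1⟩ := hθ
  have abs_mul_le {c : ℝ} (z : ℝ) (hc : -1 ≤ c) (hc' : c ≤ 1) : |c * z| ≤ |z| := by
    rw [abs_mul]
    exact mul_le_of_le_one_left (abs_nonneg z) (abs_le.2 ⟨hc, hc'⟩)
  calc |(2 * θ - 1) * P + (1 - θ) * D - θ * E|
      ≤ |(2 * θ - 1) * P| + |(1 - θ) * D| + |θ * E| :=
        (abs_sub _ _).trans (by gcongr; exact abs_add_le _ _)
    _ ≤ |P| + |D| + |E| :=
        add_le_add_three (abs_mul_le P (by linarith) (by linarith))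
          (abs_mul_le D (by linarith) (by linarith)) (abs_mul_le E (by linarith) h1)

theorem abs_rationalCubic_sub_chord_le (A B D E : ℝ) (hu : 0 < u) (hv : 0 < v)
    (hθ : θ ∈ Icc (0 : ℝ) 1) :
    |rationalCubic u v A B D E θ - (A * (1 - θ) + B * θ)| ≤
      u * (|B - A| + |D| + |E|) / v := by
  have hs : 0 ≤ θ * (1 - θ) := mul_nonneg hθ.1 (sub_nonneg.2 hθ.2)
  have hden : 0 < u + v * θ * (1 - θ) := by
    rw [mul_assoc]
    positivity
  have hweight : u * (θ * (1 - θ)) / (u + v * θ * (1 - θ)) ≤ u / v := by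
    rw [div_le_div_iff₀ hden hv]
    linarith [mul_pos hu hu]
  rw [rationalCubic_sub_chord A B D E hden.ne', abs_mul,
    abs_of_nonneg (div_nonneg (mul_nonneg hu.le hs) hden.le), mul_div_right_comm u (_ + _)]
  exact mul_le_mul hweight (abs_hermite_combination_le _ _ _ hθ) (abs_nonneg _)
    (div_nonneg hu.le hv.le)

theorem tendstoUniformlyOn_rationalCubic_atTop (A B D E : ℝ) (hu : 0 < u) :
    TendstoUniformlyOn (fun v ↦ rationalCubic u v A B D E) (fun θ ↦ A * (1 - θ) + B * θ)
      atTop (Icc 0 1) := by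
  rw [Metric.tendstoUniformlyOn_iff]
  intro ε hε
  have hbound : Tendsto (fun v : ℝ ↦ u * (|B - A| + |D| + |E|) / v) atTop (nhds 0) :=
    tendsto_const_nhds.div_atTop tendsto_id
  filter_upwards [hbound.eventually_lt_const hε, eventually_gt_atTop 0] with v hvε hv θ hθ
  rw [dist_comm, Real.dist_eq]
  exact (abs_rationalCubic_sub_chord_le A B D E hu hv hθ).trans_lt hvε

end RationalCubic

theorem stmt_15_general
    (N : ℕ) (hN : 1 < N)
    (x y d : ℕ → ℝ)
    (hx : ∀ i, 1 ≤ i → i < N → x i < x (i + 1))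
    (a : ℕ → ℝ) (ha : ∀ i, a i = (x (i + 1) - x i) / (x N - x 1))
    (L : ℕ → ℝ → ℝ)
    (hL : ∀ i, 1 ≤ i → i < N → ∀ t : ℝ, L i t =
      a i * t + (x N * x i - x 1 * x (i + 1)) / (x N - x 1))
    (α u : ℕ → ℝ)
    (hα : ∀ i, 1 ≤ i → i < N → |α i| < 1)
    (hu : ∀ i, 1 ≤ i → i < N → 0 < u i)
    (Ψfam : (ℕ → ℝ) → ℝ → ℝ)
    (hfam : ∀ v : ℕ → ℝ, (∀ i, 1 ≤ i → i < N → 0 < v i) →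
      ContinuousOn (Ψfam v) (Icc (x 1) (x N)) ∧
      ∀ i, 1 ≤ i → i < N → ∀ t ∈ Icc (x 1) (x N),
        ∀ θ : ℝ, θ = (t - x 1) / (x N - x 1) →
        Ψfam v (L i t) = α i * Ψfam v t +
          (u i * (y i - α i * y 1) * (1 - θ) ^ 3
            + ((3 * u i + v i) * (y i - α i * y 1)
                + u i * (x (i + 1) - x i) * d i
                - α i * u i * (x N - x 1) * d 1) * θ * (1 - θ) ^ 2
            + ((3 * u i + v i) * (y (i + 1) - α i * y N)
                - u i * (x (i + 1) - x i) * d (i + 1)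
                + α i * u i * (x N - x 1) * d N) * θ ^ 2 * (1 - θ)
            + u i * (y (i + 1) - α i * y N) * θ ^ 3)
          / (u i + v i * θ * (1 - θ)))
    (Ψinf : ℝ → ℝ)
    (hinfc : ContinuousOn Ψinf (Icc (x 1) (x N)))
    (hinf : ∀ i, 1 ≤ i → i < N → ∀ t ∈ Icc (x 1) (x N),
      ∀ θ : ℝ, θ = (t - x 1) / (x N - x 1) →
      Ψinf (L i t) = α i * Ψinf t
        + (y i - α i * y 1) * (1 - θ) + (y (i + 1) - α i * y N) * θ) :
    ∀ ε > (0 : ℝ), ∃ M : ℝ, ∀ v : ℕ → ℝ,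
      (∀ i, 1 ≤ i → i < N → 0 < v i) →
      (∀ i, 1 ≤ i → i < N → M ≤ v i) →
      ∀ t ∈ Icc (x 1) (x N), |Ψfam v t - Ψinf t| ≤ ε := by
  intro ε hε
  have hxN : x 1 < x N :=
    strictMonoOn_Icc_one_of_lt_succ hx ⟨le_rfl, hN.le⟩ ⟨hN.le, le_rfl⟩ hN
  have hΨinf : IsFractalFunction N x α
      (fun i θ ↦ (y i - α i * y 1) * (1 - θ) + (y (i + 1) - α i * y N) * θ) Ψinf :=
    .of_apply_affine hxN hinfc fun i ⟨hi1, hiN⟩ t ht ↦ by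
      rw [← ha, ← hL i hi1 hiN, hinf i hi1 hiN t ht _ rfl, smul_eq_mul, add_assoc]
  obtain ⟨S, hS, hclose⟩ := hΨinf.exists_mem_forall_norm_sub_le hN (fun i hi ↦ hα i hi.1 hi.2)
    (fun i hi ↦ tendstoUniformlyOn_rationalCubic_atTop _ _
      ((x (i + 1) - x i) * d i - α i * (x N - x 1) * d 1)
      ((x (i + 1) - x i) * d (i + 1) - α i * (x N - x 1) * d N) (hu i hi.1 hi.2)) hε
  obtain ⟨M, hM⟩ := mem_atTop_sets.1 hS
  refine ⟨M, fun v hv hMv ↦ hclose v _ (fun i hi ↦ hM _ (hMv i hi.1 hi.2)) ?_⟩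
  obtain ⟨hcont, hmap⟩ := hfam v hv
  refine .of_apply_affine hxN hcont fun i ⟨hi1, hiN⟩ t ht ↦ ?_
  rw [← ha, ← hL i hi1 hiN, hmap i hi1 hiN t ht _ rfl, rationalCubic, smul_eq_mul]
  ring

/-- Interval tension property: as `min vᵢ → ∞`, the RCSFIFs `Ψ_v`
converge uniformly on `I` to the affine FIF `Ψ∞` satisfying
`Ψ∞(Lᵢ(x)) = αᵢ Ψ∞(x) + (yᵢ − αᵢ y₁)(1−θ) + (y_{i+1} − αᵢ y_N)θ`. -/
theorem stmt_15
    (N : ℕ) (hN : 2 < N)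
    (x y d : ℕ → ℝ)
    (hx : ∀ i, 1 ≤ i → i < N → x i < x (i + 1))
    (a : ℕ → ℝ) (ha : ∀ i, a i = (x (i + 1) - x i) / (x N - x 1))
    (L : ℕ → ℝ → ℝ)
    (hL : ∀ i, 1 ≤ i → i < N → ∀ t : ℝ, L i t =
      a i * t + (x N * x i - x 1 * x (i + 1)) / (x N - x 1))
    (α u : ℕ → ℝ) (κ : ℝ)
    (hκ0 : 0 ≤ κ) (hκ1 : κ < 1)
    (hα : ∀ i, 1 ≤ i → i < N → |α i| ≤ κ * a i)
    (hu : ∀ i, 1 ≤ i → i < N → 0 < u i)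
    (Ψfam : (ℕ → ℝ) → ℝ → ℝ)
    (hfam : ∀ v : ℕ → ℝ, (∀ i, 1 ≤ i → i < N → 0 < v i) →
      ContinuousOn (Ψfam v) (Set.Icc (x 1) (x N)) ∧
      ∀ i, 1 ≤ i → i < N → ∀ t ∈ Set.Icc (x 1) (x N),
        ∀ θ : ℝ, θ = (t - x 1) / (x N - x 1) →
        Ψfam v (L i t) = α i * Ψfam v t +
          (u i * (y i - α i * y 1) * (1 - θ) ^ 3
            + ((3 * u i + v i) * (y i - α i * y 1)
                + u i * (x (i + 1) - x i) * d i
                - α i * u i * (x N - x 1) * d 1) * θ * (1 - θ) ^ 2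
            + ((3 * u i + v i) * (y (i + 1) - α i * y N)
                - u i * (x (i + 1) - x i) * d (i + 1)
                + α i * u i * (x N - x 1) * d N) * θ ^ 2 * (1 - θ)
            + u i * (y (i + 1) - α i * y N) * θ ^ 3)
          / (u i + v i * θ * (1 - θ)))
    (Ψinf : ℝ → ℝ)
    (hinfc : ContinuousOn Ψinf (Set.Icc (x 1) (x N)))
    (hinf : ∀ i, 1 ≤ i → i < N → ∀ t ∈ Set.Icc (x 1) (x N),
      ∀ θ : ℝ, θ = (t - x 1) / (x N - x 1) →
      Ψinf (L i t) = α i * Ψinf t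
        + (y i - α i * y 1) * (1 - θ) + (y (i + 1) - α i * y N) * θ) :
    ∀ ε > (0 : ℝ), ∃ M : ℝ, ∀ v : ℕ → ℝ,
      (∀ i, 1 ≤ i → i < N → 0 < v i) →
      (∀ i, 1 ≤ i → i < N → M ≤ v i) →
      ∀ t ∈ Set.Icc (x 1) (x N), |Ψfam v t - Ψinf t| ≤ ε := by
  have hα_lt (i : ℕ) (hi1 : 1 ≤ i) (hiN : i < N) : |α i| < 1 := by
    have ha_le : a i ≤ 1 :=
      ha i ▸ cell_ratio_le_one (strictMonoOn_Icc_one_of_lt_succ hx).monotoneOn ⟨hi1, hiN⟩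
    exact (hα i hi1 hiN).trans_lt ((mul_le_of_le_one_right hκ0 ha_le).trans_lt hκ1)
  exact stmt_15_general N (by omega) x y d hx a ha L hL α u hα_lt hu Ψfam hfam Ψinf hinfc hinf
end
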